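/- Let E and F be real inner product spaces, let n ≥ 1, let e : Fin n → E be an orthonormal family, let M ≥ 0, and let A, B : E → F be continuous linear maps with operator norms ‖A‖ ≤ M and ‖B‖ ≤ M. Then √(det (⟪A (e i), A (e j)⟫)_{i,j}) ≤ √(det (⟪B (e i), B (e j)⟫)_{i,j}) + n · M^{n−1} · ‖A − B‖. -/

import Mathlib

open RealInnerProductSpace

/-!
The volume `√(det ⟪v i, v j⟫)` is dual to the comass, that is, to the operator norm of alternating
forms: `‖f v‖ ≤ ‖f‖ * √(det ⟪v i, v j⟫)` for every `n`-form `f`, and equality with `‖f‖ ≤ 1` is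
attained by the determinant in an orthonormal basis of the span of `v`, precomposed with the
orthogonal projection onto this span. Such an `f` has operator norm at most `1` by Hadamard's
inequality. Choosing `f` for the vectors `A (e i)` gives
`J_n A = ‖f (A ∘ e)‖ ≤ ‖f (B ∘ e)‖ + ‖f (A ∘ e) - f (B ∘ e)‖`, where the first term is at most
`J_n B`, and telescoping the multilinear `f` bounds the second.
-/

section

open Matrix Module Submodule

variable {𝕜 ι F : Type*} [RCLike 𝕜] [Fintype ι]
  [NormedAddCommGroup F] [InnerProductSpace 𝕜 F]

lemma nonempty_orthonormalBasis_span_range {v : ι → F} (hv : LinearIndependent 𝕜 v) :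
    Nonempty (OrthonormalBasis ι 𝕜 (span 𝕜 (Set.range v))) := by
  have : FiniteDimensional 𝕜 (span 𝕜 (Set.range v)) := .span_of_finite 𝕜 (Set.finite_range v)
  exact ⟨(stdOrthonormalBasis 𝕜 _).reindex
    (Fintype.equivFinOfCardEq (finrank_span_eq_card hv).symm).symm⟩

variable [DecidableEq ι]

variable (𝕜) in
/-- The volume of the parallelepiped spanned by a family `v`, equivalently the norm of the simple
multivector `⋀ i, v i`. For `v = A ∘ e` with `e` orthonormal this is the Jacobian of `A` on the span
of `e`. The determinant is a nonnegative real number; `RCLike.re` only changes its type. -/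
noncomputable def gramVolume (v : ι → F) : ℝ :=
  √(RCLike.re (gram 𝕜 v).det)

lemma gramVolume_nonneg (v : ι → F) : 0 ≤ gramVolume 𝕜 v :=
  Real.sqrt_nonneg _

lemma gramVolume_eq_zero_of_not_linearIndependent {v : ι → F} (hv : ¬LinearIndependent 𝕜 v) :
    gramVolume 𝕜 v = 0 := by
  have hdet : (gram 𝕜 v).det = 0 := not_not.mp (mt det_gram_ne_zero_iff_linearIndependent.mp hv)
  simp [gramVolume, hdet]

lemma gramVolume_coe {S : Submodule 𝕜 F} (v : ι → S) :
    gramVolume 𝕜 (fun i => (v i : F)) = gramVolume 𝕜 v :=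
  rfl

lemma norm_orthonormalBasis_det_eq_gramVolume (b : OrthonormalBasis ι 𝕜 F) (v : ι → F) :
    ‖b.toBasis.det v‖ = gramVolume 𝕜 v := by
  have hgram : gram 𝕜 v = (b.toBasis.toMatrix v)ᴴ * b.toBasis.toMatrix v :=
    gram_eq_conjTranspose_mul b v
  have hdet : (gram 𝕜 v).det = ((‖b.toBasis.det v‖ ^ 2 : ℝ) : 𝕜) := by
    rw [hgram, det_mul, det_conjTranspose, Basis.det_apply, RCLike.star_def, RCLike.conj_mul,
      RCLike.ofReal_pow]
  rw [gramVolume, hdet, RCLike.ofReal_re, Real.sqrt_sq (norm_nonneg _)]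

/-- Hadamard's inequality. -/
lemma gramVolume_le_prod_norm (v : ι → F) : gramVolume 𝕜 v ≤ ∏ i, ‖v i‖ := by
  by_cases hv : LinearIndependent 𝕜 v
  · let : LinearOrder ι := LinearOrder.lift' (Fintype.equivFin ι) (Fintype.equivFin ι).injective
    let : LocallyFiniteOrderBot ι := .ofIic ι (fun i => {j | j ≤ i}) (by simp)
    have : FiniteDimensional 𝕜 (span 𝕜 (Set.range v)) := .span_of_finite 𝕜 (Set.finite_range v)
    let w : ι → span 𝕜 (Set.range v) := fun i => ⟨v i, subset_span ⟨i, rfl⟩⟩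
    let b := InnerProductSpace.gramSchmidtOrthonormalBasis (finrank_span_eq_card hv) w
    calc gramVolume 𝕜 v = ‖b.toBasis.det w‖ := by
          rw [norm_orthonormalBasis_det_eq_gramVolume, ← gramVolume_coe]
      _ = ∏ i, ‖inner 𝕜 (b i) (w i)‖ := by
          rw [InnerProductSpace.gramSchmidtOrthonormalBasis_det, norm_prod]
      _ ≤ ∏ i, ‖v i‖ := by
          gcongr with i
          simpa [b.norm_eq_one] using norm_inner_le_norm (𝕜 := 𝕜) (b i) (w i)
  · rw [gramVolume_eq_zero_of_not_linearIndependent hv]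
    positivity

lemma norm_apply_le_opNorm_mul_gramVolume (f : F [⋀^ι]→L[𝕜] 𝕜) (v : ι → F) :
    ‖f v‖ ≤ ‖f‖ * gramVolume 𝕜 v := by
  by_cases hv : LinearIndependent 𝕜 v
  · obtain ⟨b⟩ := nonempty_orthonormalBasis_span_range hv
    let w : ι → span 𝕜 (Set.range v) := fun i => ⟨v i, subset_span ⟨i, rfl⟩⟩
    have hfv : f v = f (fun i => (b i : F)) * b.toBasis.det w := by
      let g := f.toAlternatingMap.compLinearMap (span 𝕜 (Set.range v)).subtype
      simpa [g, w, Function.comp_def] using DFunLike.congr_fun (g.eq_smul_basis_det b.toBasis) w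
    have hfb : ‖f (fun i => (b i : F))‖ ≤ ‖f‖ := by
      have hb (i : ι) : ‖(b i : F)‖ = 1 := b.norm_eq_one i
      simpa only [hb, Finset.prod_const_one, mul_one] using f.le_opNorm (fun i => (b i : F))
    calc ‖f v‖ = ‖f (fun i => (b i : F))‖ * gramVolume 𝕜 v := by
          rw [hfv, norm_mul, norm_orthonormalBasis_det_eq_gramVolume, ← gramVolume_coe]
      _ ≤ ‖f‖ * gramVolume 𝕜 v := by gcongr; exact gramVolume_nonneg v
  · have hfv : f v = 0 := f.toAlternatingMap.map_linearDependent v hv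
    simp [hfv, gramVolume_eq_zero_of_not_linearIndependent hv]

lemma exists_opNorm_le_one_norm_apply_eq_gramVolume (v : ι → F) :
    ∃ f : F [⋀^ι]→L[𝕜] 𝕜, ‖f‖ ≤ 1 ∧ ‖f v‖ = gramVolume 𝕜 v := by
  by_cases hv : LinearIndependent 𝕜 v
  · obtain ⟨b⟩ := nonempty_orthonormalBasis_span_range hv
    let S := span 𝕜 (Set.range v)
    have : FiniteDimensional 𝕜 S := b.toBasis.finiteDimensional_of_finite
    let f : F [⋀^ι]→ₗ[𝕜] 𝕜 := b.toBasis.det.compLinearMap S.orthogonalProjectionOnto.toLinearMap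
    have hf (w : ι → F) : ‖f w‖ ≤ 1 * ∏ i, ‖w i‖ := by
      calc ‖f w‖ = gramVolume 𝕜 (fun i => S.orthogonalProjectionOnto (w i)) :=
            norm_orthonormalBasis_det_eq_gramVolume b _
        _ ≤ ∏ i, ‖S.orthogonalProjectionOnto (w i)‖ := gramVolume_le_prod_norm _
        _ ≤ 1 * ∏ i, ‖w i‖ := by
            rw [one_mul]
            gcongr
            exact S.norm_orthogonalProjectionOnto_apply_le _
    refine ⟨f.mkContinuous 1 hf, f.mkContinuous_norm_le zero_le_one hf, ?_⟩
    have hproj (i : ι) : (S.orthogonalProjectionOnto (v i) : F) = v i :=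
      S.starProjection_eq_self_iff.mpr (subset_span ⟨i, rfl⟩)
    calc ‖f v‖ = gramVolume 𝕜 (fun i => (S.orthogonalProjectionOnto (v i) : F)) := by
          rw [gramVolume_coe]
          exact norm_orthonormalBasis_det_eq_gramVolume b _
      _ = gramVolume 𝕜 v := by simp only [hproj]
  · exact ⟨0, by simp, by simp [gramVolume_eq_zero_of_not_linearIndependent hv]⟩

lemma gramVolume_le_gramVolume_add (v w : ι → F) :
    gramVolume 𝕜 v ≤ gramVolume 𝕜 w +
      Fintype.card ι * max ‖v‖ ‖w‖ ^ (Fintype.card ι - 1) * ‖v - w‖ := by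
  obtain ⟨f, hf, hfv⟩ := exists_opNorm_le_one_norm_apply_eq_gramVolume (𝕜 := 𝕜) v
  calc gramVolume 𝕜 v = ‖f v‖ := hfv.symm
    _ ≤ ‖f w‖ + ‖f v - f w‖ := norm_le_insert' _ _
    _ ≤ ‖f‖ * gramVolume 𝕜 w +
          ‖f‖ * Fintype.card ι * max ‖v‖ ‖w‖ ^ (Fintype.card ι - 1) * ‖v - w‖ :=
        add_le_add (norm_apply_le_opNorm_mul_gramVolume f w) (f.norm_image_sub_le v w)
    _ ≤ 1 * gramVolume 𝕜 w +
          1 * Fintype.card ι * max ‖v‖ ‖w‖ ^ (Fintype.card ι - 1) * ‖v - w‖ := by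
        gcongr
        exact gramVolume_nonneg w
    _ = _ := by simp only [one_mul]

theorem sqrt_gram_det_lipschitz_general
    {E : Type*} [SeminormedAddCommGroup E] [NormedSpace 𝕜 E]
    {e : ι → E} (he : ∀ i, ‖e i‖ ≤ 1) {M : ℝ} {A B : E →L[𝕜] F} (hA : ‖A‖ ≤ M) (hB : ‖B‖ ≤ M) :
    gramVolume 𝕜 (A ∘ e) ≤ gramVolume 𝕜 (B ∘ e) +
      Fintype.card ι * M ^ (Fintype.card ι - 1) * ‖A - B‖ := by
  have hle (T : E →L[𝕜] F) : ‖T ∘ e‖ ≤ ‖T‖ :=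
    (pi_norm_le_iff_of_nonneg (norm_nonneg T)).mpr fun i => T.unit_le_opNorm (e i) (he i)
  calc gramVolume 𝕜 (A ∘ e)
      ≤ gramVolume 𝕜 (B ∘ e) + Fintype.card ι *
          max ‖A ∘ e‖ ‖B ∘ e‖ ^ (Fintype.card ι - 1) * ‖(A - B : E →L[𝕜] F) ∘ e‖ :=
        gramVolume_le_gramVolume_add (A ∘ e) (B ∘ e)
    _ ≤ gramVolume 𝕜 (B ∘ e) + Fintype.card ι * M ^ (Fintype.card ι - 1) * ‖A - B‖ := by
        have hM : 0 ≤ M := (norm_nonneg A).trans hA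
        gcongr
        · exact max_le ((hle A).trans hA) ((hle B).trans hB)
        · exact hle (A - B)

end

/-- The map `A ↦ ΛⁿA` is locally Lipschitz on bounded sets: quantitative comparison of
`n`-dimensional Jacobians (square roots of Gram determinants) of two bounded linear maps. -/
theorem sqrt_gram_det_lipschitz
    {E F : Type*} [NormedAddCommGroup E] [InnerProductSpace ℝ E]
    [NormedAddCommGroup F] [InnerProductSpace ℝ F]
    {n : ℕ} (hn : 1 ≤ n) (e : Fin n → E) (he : Orthonormal ℝ e)
    (M : ℝ) (hM : 0 ≤ M) (A B : E →L[ℝ] F) (hA : ‖A‖ ≤ M) (hB : ‖B‖ ≤ M) :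
    Real.sqrt (Matrix.det (Matrix.of fun i j => ⟪A (e i), A (e j)⟫))
      ≤ Real.sqrt (Matrix.det (Matrix.of fun i j => ⟪B (e i), B (e j)⟫))
        + n * M ^ (n - 1) * ‖A - B‖ := by
  simpa [gramVolume, Matrix.gram] using
    sqrt_gram_det_lipschitz_general (fun i => (he.1 i).le) hA hB
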